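/- Let E be a homogeneous effect algebra. Every finite compatible subset of E can be embedded into a block of E, i.e. for every finite compatible M ⊆ E there is a block B of E with M ⊆ B. -/

import Mathlib

/-- An effect algebra: a partial commutative, associative operation `oplus`
(with definedness encoded via `Option`), constants `zero` and `one`,
unique orthosupplements, and `a ⊕ 1` defined only for `a = 0`. -/
structure EffectAlgebra (E : Type*) where
  oplus : E → E → Option E
  zero : E
  one : E
  comm : ∀ a b, oplus a b = oplus b a
  assoc : ∀ a b c ab abc, oplus a b = some ab → oplus ab c = some abc →
    ∃ bc, oplus b c = some bc ∧ oplus a bc = some abc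
  compl_exists : ∀ a, ∃ b, oplus a b = some one
  compl_unique : ∀ a b c, oplus a b = some one → oplus a c = some one → b = c
  add_one : ∀ a b, oplus a one = some b → a = zero

namespace EffectAlgebra

variable {E : Type*} (A : EffectAlgebra E)

/-- `a ⊥ b` : the sum `a ⊕ b` is defined. -/
def Perp (a b : E) : Prop := (A.oplus a b).isSome

/-- `a ≤ b` iff `b = a ⊕ c` for some `c`. -/
def le (a b : E) : Prop := ∃ c, A.oplus a c = some b

/-- The orthosupplement `a'`: the unique `b` with `a ⊕ b = 1`. -/
noncomputable def compl (a : E) : E :=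
  @Classical.epsilon E ⟨A.zero⟩ fun b => A.oplus a b = some A.one

/-- `a ⊖ b` : the unique `c` with `b ⊕ c = a` (defined when `b ≤ a`). -/
noncomputable def ominus (a b : E) : E :=
  @Classical.epsilon E ⟨A.zero⟩ fun c => A.oplus b c = some a

/-- Homogeneity. -/
def Homogeneous : Prop :=
  ∀ u v₁ v₂ s, A.oplus v₁ v₂ = some s → A.le u s → A.le u (A.compl s) →
    ∃ u₁ u₂, A.le u₁ v₁ ∧ A.le u₂ v₂ ∧ A.oplus u₁ u₂ = some u

/-- Riesz decomposition property. -/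
def RDP : Prop :=
  ∀ u v₁ v₂ s, A.oplus v₁ v₂ = some s → A.le u s →
    ∃ u₁ u₂, A.le u₁ v₁ ∧ A.le u₂ v₂ ∧ A.oplus u₁ u₂ = some u

/-- The sum `c₁ ⊕ … ⊕ cₙ` of a finite family (a list); `some s` iff the family
is orthogonal with sum `s`. -/
def sumList : List E → Option E
  | [] => some A.zero
  | x :: xs => (sumList xs).bind fun s => A.oplus x s

/-- The subfamily of `C` indexed by a set of indices `S ⊆ {1,…,n}`. -/
def pickList (C : List E) (S : Finset (Fin C.length)) : List E :=
  (S.sort (· ≤ ·)).map C.get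

/-- `C` is an orthogonal cover of `M`. -/
def IsCoverOf (C : List E) (M : Set E) : Prop :=
  (A.sumList C).isSome ∧
    ∀ a ∈ M, ∃ S : Finset (Fin C.length), A.sumList (pickList C S) = some a

/-- `M` is compatible with covers in `X`: every finite subset of `M` has an
orthogonal cover with range contained in `X`. -/
def CompatWithCoversIn (M X : Set E) : Prop :=
  ∀ F : Finset E, ↑F ⊆ M →
    ∃ C : List E, (∀ c ∈ C, c ∈ X) ∧ A.IsCoverOf C ↑F

/-- `M` is compatible (with covers in `E`). -/
def Compatible (M : Set E) : Prop := A.CompatWithCoversIn M Set.univ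

/-- `M` is internally compatible. -/
def InternallyCompatible (M : Set E) : Prop := A.CompatWithCoversIn M M

/-- `D` is a refinement of `C`: a partition `{P i}` of the index set of `D`
with `C i = ⊕_{j ∈ P i} D j`. -/
def IsRefinement (D C : List E) : Prop :=
  ∃ P : Fin C.length → Finset (Fin D.length),
    (∀ i j, i ≠ j → Disjoint (P i) (P j)) ∧
    (∀ k, ∃ i, k ∈ P i) ∧
    (∀ i, A.sumList (pickList D (P i)) = some (C.get i))

/-- One step of the closure construction `M ↦ M₁`. -/
def closureStep (M : Set E) : Set E :=
  {x | ∃ y ∈ M, A.le x y ∧ A.le x (A.compl y)} ∪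
  {z | ∃ y ∈ M, ∃ x, A.le x y ∧ A.le x (A.compl y) ∧ A.oplus x z = some y}

/-- The sets `Mₙ`. -/
def closureSeq (M : Set E) (n : ℕ) : Set E := (A.closureStep)^[n] M

/-- The closure `M̄ = ⋃ₙ Mₙ`. -/
def closure (M : Set E) : Set E := ⋃ n, A.closureSeq M n

/-- `B` is a sub-effect algebra of `E`. -/
def IsSubEA (B : Set E) : Prop :=
  A.one ∈ B ∧ ∀ a ∈ B, ∀ b ∈ B, A.le b a → A.ominus a b ∈ B

/-- The Riesz decomposition property for (the effect algebra on) a subset `B`. -/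
def RDPOn (B : Set E) : Prop :=
  ∀ u v₁ v₂ s, u ∈ B → v₁ ∈ B → v₂ ∈ B → A.oplus v₁ v₂ = some s → A.le u s →
    ∃ u₁ u₂, u₁ ∈ B ∧ u₂ ∈ B ∧ A.le u₁ v₁ ∧ A.le u₂ v₂ ∧ A.oplus u₁ u₂ = some u

/-- Homogeneity for (the effect algebra on) a subset `B`. -/
def HomogeneousOn (B : Set E) : Prop :=
  ∀ u v₁ v₂ s, u ∈ B → v₁ ∈ B → v₂ ∈ B → A.oplus v₁ v₂ = some s →
    A.le u s → A.le u (A.compl s) →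
    ∃ u₁ u₂, u₁ ∈ B ∧ u₂ ∈ B ∧ A.le u₁ v₁ ∧ A.le u₂ v₂ ∧ A.oplus u₁ u₂ = some u

/-- A block: a maximal sub-effect algebra satisfying the Riesz decomposition
property. -/
def IsBlock (B : Set E) : Prop :=
  A.IsSubEA B ∧ A.RDPOn B ∧
    ∀ B', A.IsSubEA B' → A.RDPOn B' → B ⊆ B' → B' = B

/-- A block of the sub-effect algebra on `F`: a maximal sub-effect algebra of
`F` satisfying the Riesz decomposition property. -/
def IsBlockIn (F B : Set E) : Prop :=
  B ⊆ F ∧ A.IsSubEA B ∧ A.RDPOn B ∧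
    ∀ B', B' ⊆ F → A.IsSubEA B' → A.RDPOn B' → B ⊆ B' → B' = B

/-- `a` is sharp: the infimum `a ∧ a'` exists and equals `0`, i.e. every common
lower bound of `a` and `a'` is `0`. -/
def Sharp (a : E) : Prop :=
  ∀ b, A.le b a → A.le b (A.compl a) → b = A.zero

/-- `a` is sharp in the sub-effect algebra on `F`. -/
def SharpIn (F : Set E) (a : E) : Prop :=
  a ∈ F ∧ ∀ b ∈ F, A.le b a → A.le b (A.compl a) → b = A.zero

/-- `a` is principal. -/
def Principal (a : E) : Prop :=
  ∀ x y s, A.le x a → A.le y a → A.oplus x y = some s → A.le s a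

/-- `a` is principal in the sub-effect algebra on `B`. -/
def PrincipalIn (B : Set E) (a : E) : Prop :=
  a ∈ B ∧ ∀ x ∈ B, ∀ y ∈ B, ∀ s, A.le x a → A.le y a →
    A.oplus x y = some s → A.le s a

/-- `a` is central: principal, and every `b` has a unique decomposition
`b = b₁ ⊕ b₂` with `b₁ ≤ a`, `b₂ ≤ a'`. -/
def Central (a : E) : Prop :=
  A.Principal a ∧ ∀ b, ∃! p : E × E,
    A.le p.1 a ∧ A.le p.2 (A.compl a) ∧ A.oplus p.1 p.2 = some b

/-- `a` is central in the sub-effect algebra on `B`. -/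
def CentralIn (B : Set E) (a : E) : Prop :=
  A.PrincipalIn B a ∧ ∀ b ∈ B, ∃! p : E × E,
    p.1 ∈ B ∧ p.2 ∈ B ∧ A.le p.1 a ∧ A.le p.2 (A.compl a) ∧
      A.oplus p.1 p.2 = some b

/-- The center `C(E)`. -/
def center : Set E := {a | A.Central a}

/-- The compatibility center `K(E)`: the intersection of all blocks. -/
def compatCenter : Set E := {x | ∀ B, A.IsBlock B → x ∈ B}

end EffectAlgebra


namespace EffectAlgebra

/-- The total commutative monoid extending an effect algebra: `none` means undefined. -/
def Ext {E : Type*} (_A : EffectAlgebra E) := Option E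

namespace Ext

variable {E : Type*} {A : EffectAlgebra E}

/-- The embedding. -/
def of (A : EffectAlgebra E) (a : E) : Ext A := (some a : Option E)

/-- Undefined. -/
def bot (A : EffectAlgebra E) : Ext A := (none : Option E)

/-- Total addition. -/
def plus (x y : Ext A) : Ext A := Option.bind x fun a => Option.bind y fun b => A.oplus a b

theorem botOrOf (x : Ext A) : x = bot A ∨ ∃ a, x = of A a := by
  cases x with
  | none => exact Or.inl rfl
  | some a => exact Or.inr ⟨a, rfl⟩

theorem of_ne (a : E) : of A a ≠ bot A := fun h => Option.some_ne_none a h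

theorem of_inj {a b : E} (h : of A a = of A b) : a = b := Option.some.inj h

theorem plus_of (a b : E) : plus (of A a) (of A b) = A.oplus a b := rfl

theorem plus_bot (x : Ext A) : plus x (bot A) = bot A := by
  cases x <;> rfl

theorem bot_plus (x : Ext A) : plus (bot A) x = bot A := rfl

theorem plus_comm (x y : Ext A) : plus x y = plus y x := by
  rcases botOrOf x with rfl | ⟨a, rfl⟩
  · rw [plus_bot, bot_plus]
  rcases botOrOf y with rfl | ⟨b, rfl⟩
  · rw [plus_bot, bot_plus]
  exact A.comm a b

theorem assoc_aux (x y z : Ext A) (h : plus (plus x y) z ≠ bot A) :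
    plus (plus x y) z = plus x (plus y z) := by
  rcases botOrOf x with rfl | ⟨a, rfl⟩
  · exact absurd rfl h
  rcases botOrOf y with rfl | ⟨b, rfl⟩
  · exact absurd rfl h
  rcases botOrOf z with rfl | ⟨c, rfl⟩
  · exact absurd (plus_bot _) h
  rcases botOrOf (plus (of A a) (of A b)) with hab | ⟨ab, hab⟩
  · rw [hab] at h; exact absurd rfl h
  rw [hab] at h ⊢
  rcases botOrOf (plus (of A ab) (of A c)) with hc | ⟨abc, hc⟩
  · exact absurd hc h
  obtain ⟨bc, h1, h2⟩ := A.assoc a b c ab abc hab hc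
  have h1' : plus (of A b) (of A c) = of A bc := h1
  rw [h1', hc]
  exact h2.symm

theorem plus_assoc (x y z : Ext A) : plus (plus x y) z = plus x (plus y z) := by
  by_cases h : plus (plus x y) z = bot A
  · by_cases h' : plus x (plus y z) = bot A
    · rw [h, h']
    · have e : plus x (plus y z) = plus (plus z y) x := by rw [plus_comm x, plus_comm y]
      rw [e] at h' ⊢
      rw [assoc_aux _ _ _ h', plus_comm z, plus_comm y]
  · exact assoc_aux _ _ _ h

theorem plus_zero (x : Ext A) : plus x (of A A.zero) = x := by
  have key : ∀ a : E, A.oplus a A.zero = some a := by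
    intro a
    obtain ⟨o, ho⟩ := A.compl_exists A.one
    have : o = A.zero := A.add_one o A.one (by rw [A.comm]; exact ho)
    rw [this] at ho
    obtain ⟨b, hb⟩ := A.compl_exists a
    obtain ⟨c, h1, h2⟩ := A.assoc a b A.zero A.one A.one hb ho
    have hcb : c = b := A.compl_unique a c b h2 hb
    rw [hcb] at h1
    obtain ⟨d, h3, h4⟩ := A.assoc b a A.zero A.one A.one (by rw [A.comm]; exact hb) ho
    have : d = a := A.compl_unique b d a h4 (by rw [A.comm]; exact hb)
    rw [this] at h3
    exact h3
  rcases botOrOf x with rfl | ⟨a, rfl⟩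
  · rfl
  · exact key a

instance : Add (Ext A) := ⟨plus⟩

instance : Zero (Ext A) := ⟨of A A.zero⟩

instance : AddCommMonoid (Ext A) where
  add_assoc := plus_assoc
  zero_add x := by
    change plus (of A A.zero) x = x
    rw [plus_comm, plus_zero]
  add_zero := plus_zero
  add_comm := plus_comm
  nsmul := nsmulRec

theorem of_add (a b c : E) : of A a + of A b = of A c ↔ A.oplus a b = some c := Iff.rfl

theorem zero_def : (0 : Ext A) = of A A.zero := rfl

theorem left_ne {x y : Ext A} (h : x + y ≠ bot A) : x ≠ bot A := by
  rintro rfl; exact h (bot_plus y)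

theorem right_ne {x y : Ext A} (h : x + y ≠ bot A) : y ≠ bot A := by
  rintro rfl; exact h (plus_bot x)

theorem exists_compl {x : Ext A} (h : x ≠ bot A) : ∃ r, x + r = of A A.one := by
  rcases botOrOf x with rfl | ⟨a, rfl⟩
  · exact absurd rfl h
  obtain ⟨b, hb⟩ := A.compl_exists a
  exact ⟨of A b, hb⟩

theorem cancel {x y z : Ext A} (h : x + y = x + z) (hn : x + y ≠ bot A) : y = z := by
  obtain ⟨r, hr⟩ := exists_compl hn
  have h1 : (x + r) + y = of A A.one := by rw [← hr]; abel
  have h2 : (x + r) + z = of A A.one := by rw [← hr, h]; abel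
  have n1 : (x + r) + y ≠ bot A := h1 ▸ of_ne _
  have n2 : (x + r) + z ≠ bot A := h2 ▸ of_ne _
  rcases botOrOf (x + r) with e | ⟨a, ea⟩
  · exact absurd e (left_ne n1)
  rcases botOrOf y with e | ⟨b, rfl⟩
  · exact absurd e (right_ne n1)
  rcases botOrOf z with e | ⟨c, rfl⟩
  · exact absurd e (right_ne n2)
  rw [ea] at h1 h2
  rw [A.compl_unique a b c h1 h2]

theorem eq_zero {x y : Ext A} (h : x + y = 0) : x = 0 := by
  have h1 : (x + of A A.one) + y = of A A.one := by
    have : (x + of A A.one) + y = of A A.one + (x + y) := by abel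
    rw [this, h, add_zero]
  have n1 : x + of A A.one ≠ bot A := left_ne (h1 ▸ of_ne _)
  rcases botOrOf x with e | ⟨a, rfl⟩
  · exact absurd e (left_ne n1)
  rcases botOrOf (of A a + of A A.one) with e | ⟨b, hb⟩
  · exact absurd e n1
  rw [A.add_one a b hb]; rfl

theorem sub_sum_ne {ι : Type} {f : ι → Ext A} {S T : Finset ι} (h : ∑ i ∈ T, f i ≠ bot A)
    (hST : S ⊆ T) : ∑ i ∈ S, f i ≠ bot A := by
  classical
  rw [← Finset.sum_sdiff hST] at h
  exact right_ne h

theorem compl_spec (a : E) : of A a + of A (A.compl a) = of A A.one :=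
  @Classical.epsilon_spec E (fun b => A.oplus a b = some A.one) (A.compl_exists a)

theorem le_iff (a b : E) : A.le a b ↔ ∃ r, of A a + r = of A b := by
  constructor
  · rintro ⟨c, hc⟩; exact ⟨of A c, hc⟩
  · rintro ⟨r, hr⟩
    rcases botOrOf r with rfl | ⟨c, rfl⟩
    · exact absurd (plus_bot _) (hr ▸ of_ne b)
    · exact ⟨c, hr⟩

theorem hom2 (hH : A.Homogeneous) {u t v₁ v₂ : Ext A} (h : u + t = v₁ + v₂)
    (hn : u + (v₁ + v₂) ≠ bot A) :
    ∃ u₁ w₁ u₂ w₂, u₁ + w₁ = v₁ ∧ u₂ + w₂ = v₂ ∧ u₁ + u₂ = u := by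
  obtain ⟨r, hr⟩ := exists_compl hn
  have hs := right_ne hn
  rcases botOrOf u with rfl | ⟨u, rfl⟩
  · exact absurd rfl (left_ne hn)
  rcases botOrOf v₁ with rfl | ⟨v₁, rfl⟩
  · exact absurd rfl (left_ne hs)
  rcases botOrOf v₂ with rfl | ⟨v₂, rfl⟩
  · exact absurd rfl (right_ne hs)
  rcases botOrOf (of A v₁ + of A v₂) with e | ⟨s, es⟩
  · exact absurd e hs
  rw [es] at h hr
  have h2 : of A u + r = of A (A.compl s) := by
    have e : of A s + (of A u + r) = of A A.one := by rw [← hr]; abel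
    apply cancel (e.trans (compl_spec s).symm)
    rw [e]; exact of_ne _
  obtain ⟨u₁, u₂, l1, l2, l3⟩ := hH u v₁ v₂ s es ((le_iff _ _).2 ⟨t, h⟩) ((le_iff _ _).2 ⟨r, h2⟩)
  obtain ⟨w₁, h1⟩ := l1
  obtain ⟨w₂, h2⟩ := l2
  exact ⟨of A u₁, of A w₁, of A u₂, of A w₂, h1, h2, l3⟩

theorem homSum (hH : A.Homogeneous) {ι : Type} [DecidableEq ι] (f : ι → Ext A) (S : Finset ι) :
    ∀ u t : Ext A, u + t = ∑ i ∈ S, f i → u + ∑ i ∈ S, f i ≠ bot A →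
    ∃ g h : ι → Ext A, (∀ i ∈ S, g i + h i = f i) ∧ ∑ i ∈ S, g i = u := by
  induction S using Finset.induction_on with
  | empty =>
    intro u t h _
    rw [Finset.sum_empty] at h
    exact ⟨fun _ => 0, fun _ => 0, by simp, by simp [eq_zero h]⟩
  | insert a S ha ih =>
    intro u t h hn
    rw [Finset.sum_insert ha] at h hn
    obtain ⟨u₁, w₁, u₂, w₂, h1, h2, h3⟩ := hom2 hH h hn
    have hn2 : u₂ + ∑ i ∈ S, f i ≠ bot A := by
      have e : u + (f a + ∑ i ∈ S, f i) = (u₁ + f a) + (u₂ + ∑ i ∈ S, f i) := by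
        rw [← h3]; abel
      rw [e] at hn
      exact right_ne hn
    obtain ⟨g, k, hgk, hg⟩ := ih u₂ w₂ h2 hn2
    refine ⟨Function.update g a u₁, Function.update k a w₁, ?_, ?_⟩
    · intro i hi
      by_cases hia : i = a
      · subst hia; simpa using h1
      · rw [Function.update_of_ne hia, Function.update_of_ne hia]
        exact hgk i (Finset.mem_of_mem_insert_of_ne hi hia)
    · rw [Finset.sum_insert ha, Function.update_self, ← h3, ← hg]
      congr 1
      apply Finset.sum_congr rfl
      intro i hi
      rw [Function.update_of_ne]
      rintro rfl; exact ha hi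

/-- The hull of `C`. -/
inductive K (C : Set (Ext A)) : Ext A → Prop
  | one : K C (of A A.one)
  | base (c) : c ∈ C → K C c
  | lo (x z) : K C (x + z) → x + (x + z) ≠ bot A → K C x
  | sub (b c) : K C (b + c) → K C b → b + c ≠ bot A → K C c

theorem K.zero (C : Set (Ext A)) : K C 0 := by
  apply K.sub (of A A.one) 0
  · rw [add_zero]; exact K.one
  · exact K.one
  · rw [add_zero]; exact of_ne _

theorem K.add {C : Set (Ext A)} {a b : Ext A} (ha : K C a) (hb : K C b) (h : a + b ≠ bot A) :
    K C (a + b) := by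
  obtain ⟨r, hr⟩ := exists_compl h
  have h1 : K C (b + r) := by
    have e : a + (b + r) = of A A.one := by rw [← hr]; abel
    exact K.sub a (b + r) (e ▸ K.one) ha (e ▸ of_ne _)
  have h2 : K C r := K.sub b r h1 hb (by
    have e : a + (b + r) = of A A.one := by rw [← hr]; abel
    exact right_ne (e ▸ of_ne _))
  have e : r + (a + b) = of A A.one := by rw [← hr]; abel
  exact K.sub r (a + b) (e ▸ K.one) h2 (e ▸ of_ne _)

theorem K.sum {C : Set (Ext A)} {ι : Type} (f : ι → Ext A) (S : Finset ι) (hf : ∀ i, K C (f i)) :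
    ∑ i ∈ S, f i ≠ bot A → K C (∑ i ∈ S, f i) := by
  classical
  induction S using Finset.induction_on with
  | empty => intro _; exact K.zero C
  | insert a S ha ih =>
    intro h
    rw [Finset.sum_insert ha] at h ⊢
    exact K.add (hf a) (ih (right_ne h)) h

/-- splitting at a set `Q`, core lemma. -/
theorem split_small (hH : A.Homogeneous) {C : Set (Ext A)} {ι : Type} [DecidableEq ι]
    (f : ι → Ext A) (hf : ∀ i, K C (f i)) (Q : Finset ι) (x t : Ext A)
    (h : x + t = ∑ i ∈ Q, f i) (hn : x + ∑ i ∈ Q, f i ≠ bot A) :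
    ∃ g k : ι → Ext A, (∀ i, g i + k i = f i) ∧ (∀ i, K C (g i)) ∧ (∀ i, K C (k i)) ∧
      ∑ i ∈ Q, g i = x ∧ ∀ i, i ∉ Q → g i = f i := by
  obtain ⟨g, k, hgk, hg⟩ := homSum hH f Q x t h hn
  have key : ∀ i ∈ Q, g i + f i ≠ bot A := by
    intro i hi
    rw [← hg, ← Finset.add_sum_erase _ _ hi, ← Finset.add_sum_erase _ f hi] at hn
    have e : g i + ∑ j ∈ Q.erase i, g j + (f i + ∑ j ∈ Q.erase i, f j) =
      (g i + f i) + (∑ j ∈ Q.erase i, g j + ∑ j ∈ Q.erase i, f j) := by abel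
    rw [e] at hn
    exact left_ne hn
  have kg : ∀ i ∈ Q, K C (g i) := by
    intro i hi
    apply K.lo (g i) (k i)
    · rw [hgk i hi]; exact hf i
    · rw [hgk i hi]; exact key i hi
  refine ⟨fun i => if i ∈ Q then g i else f i, fun i => if i ∈ Q then k i else 0, ?_, ?_, ?_, ?_, ?_⟩
  · intro i
    by_cases hi : i ∈ Q
    · simp [hi, hgk]
    · simp [hi]
  · intro i
    by_cases hi : i ∈ Q
    · simpa [hi] using kg i hi
    · simpa [hi] using hf i
  · intro i
    by_cases hi : i ∈ Q
    · simp only [hi, if_true]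
      apply K.sub (g i) (k i)
      · rw [hgk i hi]; exact hf i
      · exact kg i hi
      · rw [hgk i hi]; exact right_ne (key i hi)
    · simpa [hi] using K.zero C
  · rw [← hg]
    apply Finset.sum_congr rfl
    intro i hi
    simp [hi]
  · intro i hi; simp [hi]

theorem split (hH : A.Homogeneous) {C : Set (Ext A)} {ι : Type} [Fintype ι] [DecidableEq ι]
    (f : ι → Ext A) (hf : ∀ i, K C (f i)) (h1 : ∑ i, f i = of A A.one) (P Q : Finset ι) (t : Ext A)
    (h : ∑ i ∈ P, f i + t = ∑ i ∈ Q, f i) :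
    ∃ g k : ι → Ext A, (∀ i, g i + k i = f i) ∧ (∀ i, K C (g i)) ∧ (∀ i, K C (k i)) ∧
      ∑ i ∈ Q, g i = ∑ i ∈ P, f i := by
  have hall : ∀ S : Finset ι, ∑ i ∈ S, f i ≠ bot A := fun S =>
    sub_sum_ne (T := Finset.univ) (h1 ▸ of_ne _) (Finset.subset_univ S)
  have eP : ∑ i ∈ P ∩ Q, f i + ∑ i ∈ P \ Q, f i = ∑ i ∈ P, f i :=
    Finset.sum_inter_add_sum_sdiff P Q f
  have eQ : ∑ i ∈ P ∩ Q, f i + ∑ i ∈ Q \ P, f i = ∑ i ∈ Q, f i := by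
    rw [Finset.inter_comm]; exact Finset.sum_inter_add_sum_sdiff Q P f
  have e : ∑ i ∈ P \ Q, f i + t = ∑ i ∈ Q \ P, f i := by
    have e2 : ∑ i ∈ P ∩ Q, f i + (∑ i ∈ P \ Q, f i + t) = ∑ i ∈ P ∩ Q, f i + ∑ i ∈ Q \ P, f i := by
      rw [← add_assoc, eP, eQ, h]
    apply cancel e2
    rw [e2, eQ]; exact hall Q
  have hd : Disjoint (P \ Q) (Q \ P) := by
    rw [Finset.disjoint_left]; intro a; simp; tauto
  obtain ⟨g, k, a1, a2, a3, a4, a5⟩ := split_small hH f hf (Q \ P) _ t e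
    (by rw [← Finset.sum_union hd]; exact hall _)
  refine ⟨g, k, a1, a2, a3, ?_⟩
  rw [← Finset.sum_inter_add_sum_sdiff Q P g, a4, ← eP, Finset.inter_comm]
  congr 1
  apply Finset.sum_congr rfl
  intro i hi
  apply a5
  simp at hi ⊢
  tauto

/-- Two-fold split family. -/
def dbl {ι : Type} (g k : ι → Ext A) : ι × Bool → Ext A := fun p => if p.2 then g p.1 else k p.1

theorem sum_dbl {ι : Type} [DecidableEq ι] (g k f : ι → Ext A)
    (h : ∀ i, g i + k i = f i) (S : Finset ι) :
    ∑ p ∈ S ×ˢ Finset.univ, dbl g k p = ∑ i ∈ S, f i := by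
  rw [Finset.sum_product]
  apply Finset.sum_congr rfl
  intro i _
  simp [dbl, h]

theorem sum_dbl_true {ι : Type} [DecidableEq ι] (g k : ι → Ext A) (S : Finset ι) :
    ∑ p ∈ S ×ˢ {true}, dbl g k p = ∑ i ∈ S, g i := by
  rw [Finset.sum_product]
  apply Finset.sum_congr rfl
  intro i _
  simp [dbl]

/-- `x` is a subsum of `f`. -/
def Sub {ι : Type} (f : ι → Ext A) (x : Ext A) : Prop := ∃ S : Finset ι, ∑ i ∈ S, f i = x

/-- Good family. -/
structure Good (C : Set (Ext A)) {ι : Type} [Fintype ι] (f : ι → Ext A) : Prop where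
  mem : ∀ i, K C (f i)
  one : ∑ i, f i = of A A.one
  cov : ∀ c ∈ C, Sub f c

theorem good_dbl {C : Set (Ext A)} {ι : Type} [Fintype ι] [DecidableEq ι] {f : ι → Ext A}
    (hf : Good C f) {g k : ι → Ext A} (h : ∀ i, g i + k i = f i) (hg : ∀ i, K C (g i))
    (hk : ∀ i, K C (k i)) : Good C (dbl g k) ∧ ∀ x, Sub f x → Sub (dbl g k) x := by
  have hs : ∀ x, Sub f x → Sub (dbl g k) x := by
    rintro x ⟨S, rfl⟩
    exact ⟨S ×ˢ Finset.univ, sum_dbl g k f h S⟩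
  refine ⟨⟨?_, ?_, fun c hc => hs c (hf.cov c hc)⟩, hs⟩
  · rintro ⟨i, b⟩
    cases b
    · exact hk i
    · exact hg i
  · rw [← hf.one, ← sum_dbl g k f h]
    rfl

theorem cover (hH : A.Homogeneous) {C : Set (Ext A)} {a : Ext A} (ha : K C a) :
    ∀ (ι : Type) [Fintype ι] (f : ι → Ext A), Good C f →
    ∃ (κ : Type) (_ : Fintype κ) (f' : κ → Ext A), Good C f' ∧ (∀ x, Sub f x → Sub f' x) ∧
      Sub f' a := by
  classical
  induction ha with
  | one => intro ι _ f hf; exact ⟨ι, _, f, hf, fun _ h => h, Finset.univ, hf.one⟩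
  | base c hc => intro ι _ f hf; exact ⟨ι, _, f, hf, fun _ h => h, hf.cov c hc⟩
  | lo x z _ hn ih =>
    intro ι _ f hf
    obtain ⟨κ, _, f', hf', hs, S, hS⟩ := ih ι f hf
    obtain ⟨g, k, b1, b2, b3, b4, _⟩ := split_small hH f' hf'.mem S x z hS.symm (hS ▸ hn)
    obtain ⟨c1, c2⟩ := good_dbl hf' b1 b2 b3
    exact ⟨κ × Bool, inferInstance, dbl g k, c1, fun y hy => c2 y (hs y hy), S ×ˢ {true},
      by rw [sum_dbl_true, b4]⟩
  | sub b c _ _ hn ih1 ih2 =>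
    intro ι _ f hf
    obtain ⟨κ₁, _, f₁, hf₁, hs₁, h₁⟩ := ih1 ι f hf
    obtain ⟨κ, _, f', hf', hs, P, hP⟩ := ih2 κ₁ f₁ hf₁
    obtain ⟨Q, hQ⟩ := hs _ h₁
    obtain ⟨g, k, b1, b2, b3, b4⟩ := split hH f' hf'.mem hf'.one P Q c (by rw [hP, hQ])
    obtain ⟨c1, c2⟩ := good_dbl hf' b1 b2 b3
    refine ⟨κ × Bool, inferInstance, dbl g k, c1, fun y hy => c2 y (hs y (hs₁ y hy)),
      Q ×ˢ {false}, ?_⟩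
    have e1 : ∑ p ∈ Q ×ˢ {false}, dbl g k p = ∑ i ∈ Q, k i := by
      rw [Finset.sum_product]
      apply Finset.sum_congr rfl
      intro i _
      simp [dbl]
    have e2 : ∑ i ∈ Q, g i + ∑ i ∈ Q, k i = b + c := by
      rw [← Finset.sum_add_distrib, ← hQ]
      exact Finset.sum_congr rfl fun i _ => b1 i
    rw [e1]
    rw [b4, hP] at e2
    exact cancel e2 (e2 ▸ hn)

theorem rdp (hH : A.Homogeneous) {C : Set (Ext A)} {ι : Type} [Fintype ι] (f : ι → Ext A)
    (hf : Good C f) {u v₁ v₂ t : Ext A} (hu : K C u) (hv₁ : K C v₁) (hv₂ : K C v₂)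
    (h : u + t = v₁ + v₂) (hn : v₁ + v₂ ≠ bot A) :
    ∃ u₁ w₁ u₂ w₂, K C u₁ ∧ K C u₂ ∧ u₁ + w₁ = v₁ ∧ u₂ + w₂ = v₂ ∧ u₁ + u₂ = u := by
  classical
  obtain ⟨κ₁, _, f₁, hf₁, -, s₁⟩ := cover hH hu ι f hf
  obtain ⟨κ₂, _, f₂, hf₂, m₂, s₂⟩ := cover hH hv₁ κ₁ f₁ hf₁
  obtain ⟨κ, _, f₃, hf₃, m₃, V₂, hV₂⟩ := cover hH hv₂ κ₂ f₂ hf₂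
  obtain ⟨V₁, hV₁⟩ := m₃ _ s₂
  obtain ⟨r, hr⟩ := exists_compl hn
  have e1 : v₁ + r = ∑ i ∈ V₂ᶜ, f₃ i := by
    have e : v₂ + (v₁ + r) = v₂ + ∑ i ∈ V₂ᶜ, f₃ i := by
      have := Finset.sum_add_sum_compl V₂ f₃
      rw [hV₂, hf₃.one] at this
      rw [this, ← hr]; abel
    apply cancel e
    have : v₂ + (v₁ + r) = of A A.one := by rw [← hr]; abel
    rw [this]; exact of_ne _
  obtain ⟨g, k, b1, b2, b3, b4⟩ := split hH f₃ hf₃.mem hf₃.one V₁ V₂ᶜ r (by rw [hV₁, e1])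
  obtain ⟨hd, md⟩ := good_dbl hf₃ b1 b2 b3
  obtain ⟨U, hU⟩ := md _ (m₃ _ (m₂ _ s₁))
  set d := dbl g k with hdd
  set P : Finset (κ × Bool) := V₂ᶜ ×ˢ {true} with hP
  set Q : Finset (κ × Bool) := V₂ ×ˢ Finset.univ with hQ
  have eP : ∑ i ∈ P, d i = v₁ := by rw [hP, hdd, sum_dbl_true, b4, hV₁]
  have eQ : ∑ i ∈ Q, d i = v₂ := by rw [hQ, hdd, sum_dbl g k f₃ b1, hV₂]
  have hPQ : Disjoint P Q := by
    rw [Finset.disjoint_left]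
    rintro ⟨i, b⟩ h1 h2
    simp [hP] at h1
    simp [hQ] at h2
    exact h1.1 h2
  obtain ⟨g', k', d1, d2, d3, d4⟩ := split hH d hd.mem hd.one U (P ∪ Q) t
    (by rw [hU, Finset.sum_union hPQ, eP, eQ, h])
  have hun : u ≠ bot A := left_ne (h ▸ hn)
  rw [hU, Finset.sum_union hPQ] at d4
  have e : ∀ S, ∑ i ∈ S, g' i + ∑ i ∈ S, k' i = ∑ i ∈ S, d i := fun S => by
    rw [← Finset.sum_add_distrib]; exact Finset.sum_congr rfl fun i _ => d1 i
  refine ⟨∑ i ∈ P, g' i, ∑ i ∈ P, k' i, ∑ i ∈ Q, g' i, ∑ i ∈ Q, k' i,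
    K.sum _ _ d2 (left_ne (d4 ▸ hun)), K.sum _ _ d2 (right_ne (d4 ▸ hun)), ?_, ?_, d4⟩
  · rw [e, eP]
  · rw [e, eQ]

theorem sumList_eq (L : List E) : A.sumList L = (L.map (of A)).sum := by
  induction L with
  | nil => rfl
  | cons a L ih =>
    rw [List.map_cons, List.sum_cons, ← ih]
    rfl

theorem sumList_pick (L : List E) (S : Finset (Fin L.length)) :
    A.sumList (pickList L S) = ∑ i ∈ S, of A (L.get i) := by
  rw [sumList_eq, pickList, List.map_map]
  rw [Finset.sum_eq_multiset_sum, ← Finset.sort_eq S (· ≤ ·)]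
  rfl

theorem sumList_all (L : List E) : A.sumList L = ∑ i, of A (L.get i) := by
  rw [sumList_eq, ← Fin.sum_univ_fun_getElem]
  rfl

theorem exists_rdp (hH : A.Homogeneous) (M : Finset E) (hM : A.Compatible ↑M) :
    ∃ B : Set E, (A.IsSubEA B ∧ A.RDPOn B) ∧ ↑M ⊆ B := by
  obtain ⟨L, -, hsome, hcov⟩ := hM M subset_rfl
  rw [sumList_all] at hsome
  have hne : ∑ i, of A (L.get i) ≠ bot A := by
    intro h
    rw [h] at hsome
    cases hsome
  obtain ⟨r, hr⟩ := exists_compl hne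
  let f : Option (Fin L.length) → Ext A := fun o => o.elim r fun i => of A (L.get i)
  let C : Set (Ext A) := Set.range f
  have hf : Good C f := by
    refine ⟨fun i => K.base _ ⟨i, rfl⟩, ?_, ?_⟩
    · rw [Fintype.sum_option, add_comm]
      exact hr
    · rintro _ ⟨i, rfl⟩
      exact ⟨{i}, by simp⟩
  refine ⟨{e | K C (of A e)}, ⟨⟨K.one, ?_⟩, ?_⟩, ?_⟩
  · intro a ha b hb hba
    have e : of A b + of A (A.ominus a b) = of A a :=
      @Classical.epsilon_spec E (fun c => A.oplus b c = some a) hba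
    exact K.sub (of A b) _ (e ▸ ha) hb (e ▸ of_ne _)
  · intro u v₁ v₂ s hu hv₁ hv₂ hs hus
    have hs' : of A v₁ + of A v₂ = of A s := hs
    obtain ⟨t, ht⟩ := (le_iff _ _).1 hus
    obtain ⟨u₁, w₁, u₂, w₂, k1, k2, h1, h2, h3⟩ :=
      rdp hH f hf hu hv₁ hv₂ (ht.trans hs'.symm) (hs' ▸ of_ne _)
    rcases botOrOf u₁ with rfl | ⟨u₁, rfl⟩
    · exact absurd rfl (left_ne (h3 ▸ of_ne u))
    rcases botOrOf u₂ with rfl | ⟨u₂, rfl⟩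
    · exact absurd rfl (right_ne (h3 ▸ of_ne u))
    exact ⟨u₁, u₂, k1, k2, (le_iff _ _).2 ⟨_, h1⟩, (le_iff _ _).2 ⟨_, h2⟩, h3⟩
  · intro a ha
    obtain ⟨S, hS⟩ := hcov a ha
    rw [sumList_pick] at hS
    have hS' : ∑ i ∈ S, of A (L.get i) = of A a := hS
    change K C (of A a)
    rw [← hS']
    exact K.sum _ _ (fun i => K.base _ ⟨some i, rfl⟩) (hS' ▸ of_ne a)

end Ext

end EffectAlgebra

/-- Every finite compatible subset of a homogeneous effect
algebra can be embedded into a block. -/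
theorem finite_compatible_subset_block {E : Type*} (A : EffectAlgebra E)
    (hH : A.Homogeneous) (M : Finset E) (hM : A.Compatible ↑M) :
    ∃ B : Set E, A.IsBlock B ∧ ↑M ⊆ B := by
  obtain ⟨B₀, h0, hMB⟩ := EffectAlgebra.Ext.exists_rdp hH M hM
  obtain ⟨B, hB₀, hB⟩ := zorn_subset_nonempty {B : Set E | A.IsSubEA B ∧ A.RDPOn B} (by
    intro c hc hchain hne
    refine ⟨⋃₀ c, ⟨⟨?_, ?_⟩, ?_⟩, fun s hs => Set.subset_sUnion_of_mem hs⟩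
    · obtain ⟨s, hs⟩ := hne
      exact ⟨s, hs, (hc hs).1.1⟩
    · rintro a ⟨s, hs, ha⟩ b ⟨t, ht, hb⟩ hba
      rcases hchain.total hs ht with h | h
      · exact ⟨t, ht, (hc ht).1.2 a (h ha) b hb hba⟩
      · exact ⟨s, hs, (hc hs).1.2 a ha b (h hb) hba⟩
    · rintro u v₁ v₂ s ⟨p, hp, hu⟩ ⟨q, hq, h1⟩ ⟨r, hr, h2⟩ hs hle
      have key : ∃ w ∈ c, u ∈ w ∧ v₁ ∈ w ∧ v₂ ∈ w := by
        rcases hchain.total hp hq with h | h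
        · rcases hchain.total hq hr with h' | h'
          · exact ⟨r, hr, h' (h hu), h' h1, h2⟩
          · exact ⟨q, hq, h hu, h1, h' h2⟩
        · rcases hchain.total hp hr with h' | h'
          · exact ⟨r, hr, h' hu, h' (h h1), h2⟩
          · exact ⟨p, hp, hu, h h1, h' h2⟩
      obtain ⟨w, hw, a1, a2, a3⟩ := key
      obtain ⟨u₁, u₂, b1, b2, b3⟩ := (hc hw).2 u v₁ v₂ s a1 a2 a3 hs hle
      exact ⟨u₁, u₂, ⟨w, hw, b1⟩, ⟨w, hw, b2⟩, b3⟩) B₀ h0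
  refine ⟨B, ⟨hB.prop.1, hB.prop.2, ?_⟩, hMB.trans hB₀⟩
  intro B' h1 h2 h3
  exact (hB.eq_of_subset ⟨h1, h2⟩ h3).symm
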